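/- arXiv:2105.08394 — 2 statements merged into one kernel-verified Lean document; each statement's English description precedes it below -/
import Mathlib

section
/- Let $d \geq 2$, let $V_i = V_i^1 \oplus V_i^2$ for $i = 1,\dots,d$ be finite-dimensional vector spaces, and let $T \in V_1 \otimes \cdots \otimes V_d$. For $\alpha \in \{1,2\}^d$ let $T^\alpha$ denote the projection of $T$ to $V_1^{\alpha_1} \otimes \cdots \otimes V_d^{\alpha_d}$. Suppose $T^\alpha = 0$ unless $\alpha_d = 2$ or $\alpha = (1,1,\dots,1)$. Then $\sigma(T) \geq \sigma(T^{(1,\dots,1)}) + \sigma(T^{(2,\dots,2)})$. -/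
open scoped TensorProduct BigOperators

/-- Slice rank of a tensor in a tensor product of vector spaces. -/
noncomputable def tensorSliceRank (F : Type*) [Field F] {d : ℕ} (V : Fin d → Type*)
    [∀ i, AddCommGroup (V i)] [∀ i, Module F (V i)] (T : ⨂[F] i, V i) : ℕ :=
  sInf {r | ∃ S : Fin r → ⨂[F] i, V i,
    (∀ j, ∃ i : Fin d, ∃ u : V i,
      S j ∈ Submodule.span F {t | ∃ v : ∀ k, V k, v i = u ∧ t = PiTensorProduct.tprod F v}) ∧
    T = ∑ j, S j}

/-!
A tensor `T` has slice rank at most `r` iff there are subspaces `U i ≤ V i` with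
`∑ dim U i ≤ r` and `T ∈ ∑ U i ⊗ ⨂_{k ≠ i} V k`; the latter means that `T` dies in `⨂ V i ⧸ U i`.
Take such `U i` for `r = σ(T)` and enlarge `U d` to `U d + V d ²`: every component of `T` other than
`T^{1⋯1}` then lies in the enlarged sum, hence so does `T^{1⋯1}`, and intersecting the enlarged
subspaces with the `V i ¹` bounds `σ(T^{1⋯1})`. Enlarging instead `U i` to `U i + V i ¹` for all
`i < d` isolates `T^{2⋯2}`. The two bounds add up to `∑ dim U i` because
`dim ((U + B) ∩ A) + dim (U ∩ B) = dim U` whenever `V = A ⊕ B`.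
-/

section LinearAlgebra

section Ring

variable {R V : Type*} [Ring R] [AddCommGroup V] [Module R V]

theorem comap_subtype_sup_eq_map_projectionOnto {A B : Submodule R V} (h : IsCompl A B)
    (U : Submodule R V) :
    (U ⊔ B).comap A.subtype = U.map (A.projectionOnto B h) := by
  have hU : U ⊔ B = (U.map (A.projectionOnto B h)).comap (A.projectionOnto B h) := by
    rw [Submodule.comap_map_eq, Submodule.ker_projectionOnto]
  rw [hU, ← Submodule.comap_comp, Submodule.projectionOnto_comp_subtype, Submodule.comap_id]

theorem finrank_comap_subtype_comm (A B : Submodule R V) :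
    Module.finrank R (A.comap B.subtype) = Module.finrank R (B.comap A.subtype) := by
  rw [← Submodule.finrank_map_subtype_eq, ← Submodule.finrank_map_subtype_eq,
    Submodule.map_comap_subtype, Submodule.map_comap_subtype, inf_comm]

end Ring

section DivisionRing

variable {K V V' : Type*} [DivisionRing K] [AddCommGroup V] [Module K V]
  [AddCommGroup V'] [Module K V']

theorem exists_comp_comp_eq_self (f : V →ₗ[K] V') :
    ∃ g : V' →ₗ[K] V, f ∘ₗ g ∘ₗ f = f := by
  obtain ⟨s, hs⟩ := f.rangeRestrict.exists_rightInverse_of_surjective f.range_rangeRestrict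
  obtain ⟨g, hg⟩ := LinearMap.exists_extend s
  refine ⟨g, LinearMap.ext fun v => ?_⟩
  calc f (g (f v)) = f.rangeRestrict (s (f.rangeRestrict v)) := by rw [← hg]; rfl
    _ = f v := congrArg Subtype.val (LinearMap.congr_fun hs (f.rangeRestrict v))

theorem finrank_comap_subtype_sup_add_finrank_comap_subtype {A B : Submodule K V}
    (h : IsCompl A B) (U : Submodule K V) [FiniteDimensional K U] :
    Module.finrank K ((U ⊔ B).comap A.subtype) + Module.finrank K (U.comap B.subtype) =
      Module.finrank K U := by
  have hker : ((A.projectionOnto B h).domRestrict U).ker = B.comap U.subtype := by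
    rw [LinearMap.domRestrict, LinearMap.ker_comp, Submodule.ker_projectionOnto]
  rw [comap_subtype_sup_eq_map_projectionOnto h, finrank_comap_subtype_comm U B, ← hker,
    ← LinearMap.range_domRestrict, LinearMap.finrank_range_add_finrank_ker]

instance finiteDimensional_comap_subtype (A U : Submodule K V) [FiniteDimensional K U] :
    FiniteDimensional K (U.comap A.subtype) :=
  have : FiniteDimensional K A.subtype.ker := by rw [A.ker_subtype]; infer_instance
  inferInstance

theorem finiteDimensional_comap_subtype_sup {A B : Submodule K V} (h : IsCompl A B)
    (U : Submodule K V) [FiniteDimensional K U] :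
    FiniteDimensional K ((U ⊔ B).comap A.subtype) := by
  rw [comap_subtype_sup_eq_map_projectionOnto h]
  infer_instance

end DivisionRing

end LinearAlgebra

section SliceSpan

section CommSemiring

variable (R : Type*) [CommSemiring R] {ι : Type*} {V V' : ι → Type*}
  [∀ i, AddCommMonoid (V i)] [∀ i, Module R (V i)]
  [∀ i, AddCommMonoid (V' i)] [∀ i, Module R (V' i)]

/-- The subspace `s ⊗ ⨂_{k ≠ i} V k` of `⨂ k, V k`, where `s` sits in position `i`. For a singleton
`s = {u}` its elements are the tensors of slice rank at most one with factor `u` in position `i`. -/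
def sliceSpan (i : ι) (s : Set (V i)) : Submodule R (⨂[R] k, V k) :=
  Submodule.span R {t | ∃ v : ∀ k, V k, v i ∈ s ∧ t = PiTensorProduct.tprod R v}

variable {R}

theorem tprod_mem_sliceSpan {i : ι} {s : Set (V i)} {v : ∀ k, V k} (hv : v i ∈ s) :
    PiTensorProduct.tprod R v ∈ sliceSpan R i s :=
  Submodule.subset_span ⟨v, hv, rfl⟩

theorem sliceSpan_le {i : ι} {s : Set (V i)} {P : Submodule R (⨂[R] k, V k)} :
    sliceSpan R i s ≤ P ↔ ∀ v : ∀ k, V k, v i ∈ s → PiTensorProduct.tprod R v ∈ P := by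
  rw [sliceSpan, Submodule.span_le]
  exact ⟨fun h v hv => h ⟨v, hv, rfl⟩, by rintro h _ ⟨v, hv, rfl⟩; exact h v hv⟩

theorem sliceSpan_mono {i : ι} {s s' : Set (V i)} (h : s ⊆ s') :
    sliceSpan R i s ≤ sliceSpan R i s' :=
  sliceSpan_le.2 fun _ hv => tprod_mem_sliceSpan (h hv)

theorem sliceSpan_span (i : ι) (s : Set (V i)) :
    sliceSpan R i (Submodule.span R s : Set (V i)) = sliceSpan R i s := by
  classical
  refine le_antisymm (sliceSpan_le.2 fun v hv => ?_) (sliceSpan_mono Submodule.subset_span)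
  have hs : Submodule.span R s ≤
      (sliceSpan R i s).comap ((PiTensorProduct.tprod R).toLinearMap v i) :=
    Submodule.span_le.2 fun x hx => tprod_mem_sliceSpan (by simpa using hx)
  simpa using hs hv

theorem sliceSpan_span_range {κ : Type*} (i : ι) (u : κ → V i) :
    sliceSpan R i (Submodule.span R (Set.range u) : Set (V i)) = ⨆ j, sliceSpan R i {u j} := by
  rw [sliceSpan_span]
  refine le_antisymm (sliceSpan_le.2 ?_) (iSup_le fun j => sliceSpan_mono (by simp))
  rintro v ⟨j, hj⟩
  exact Submodule.mem_iSup_of_mem j (tprod_mem_sliceSpan hj.symm)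

theorem map_mem_sliceSpan_range (f : ∀ i, V i →ₗ[R] V' i) (t : ⨂[R] i, V i) (i : ι) :
    PiTensorProduct.map f t ∈ sliceSpan R i (f i).range := by
  have hf : (PiTensorProduct.map f).range ≤ sliceSpan R i (f i).range := by
    rw [PiTensorProduct.map_range_eq_span_tprod, Submodule.span_le]
    rintro _ ⟨v, rfl⟩
    exact tprod_mem_sliceSpan ⟨v i, rfl⟩
  exact hf ⟨t, rfl⟩

end CommSemiring

theorem tprod_sub_tprod_mem_iSup_sliceSpan {R : Type*} [CommRing R] {ι : Type*} [Finite ι]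
    {V : ι → Type*} [∀ i, AddCommGroup (V i)] [∀ i, Module R (V i)] (s : ∀ i, Set (V i))
    {v w : ∀ i, V i} (h : ∀ i, v i - w i ∈ s i) :
    PiTensorProduct.tprod R v - PiTensorProduct.tprod R w ∈ ⨆ i, sliceSpan R i (s i) := by
  classical
  have := Fintype.ofFinite ι
  let : LinearOrder ι := linearOrderOfSTO WellOrderingRel
  have hsub := (PiTensorProduct.tprod R).map_sub_map_piecewise v w Finset.univ
  rw [Finset.piecewise_univ] at hsub
  rw [hsub]
  exact Submodule.sum_mem_iSup fun i => tprod_mem_sliceSpan (by simpa using h i)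

section Field

variable {F : Type*} [Field F] {ι : Type*} [Finite ι] {V V' : ι → Type*}
  [∀ i, AddCommGroup (V i)] [∀ i, Module F (V i)]
  [∀ i, AddCommGroup (V' i)] [∀ i, Module F (V' i)]

theorem ker_map_eq_iSup_sliceSpan (f : ∀ i, V i →ₗ[F] V' i) :
    (PiTensorProduct.map f).ker = ⨆ i, sliceSpan F i (f i).ker := by
  refine le_antisymm (fun t ht => ?_) (iSup_le fun i => sliceSpan_le.2 fun v hv => ?_)
  · choose g hg using fun i => exists_comp_comp_eq_self (f i)
    have hsub (t : ⨂[F] i, V i) : t - PiTensorProduct.map g (PiTensorProduct.map f t) ∈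
        ⨆ i, sliceSpan F i ((f i).ker : Set (V i)) := by
      induction t using PiTensorProduct.induction_on with
      | smul_tprod r v =>
        simp only [map_smul, PiTensorProduct.map_tprod, ← smul_sub]
        refine Submodule.smul_mem _ _ (tprod_sub_tprod_mem_iSup_sliceSpan _ fun i => ?_)
        simpa [sub_eq_zero] using (LinearMap.congr_fun (hg i) (v i)).symm
      | add x y hx hy =>
        simp only [map_add, add_sub_add_comm]
        exact add_mem hx hy
    simpa [LinearMap.mem_ker.1 ht] using hsub t
  · rw [LinearMap.mem_ker, PiTensorProduct.map_tprod]
    exact MultilinearMap.map_coord_zero _ i hv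

theorem comap_map_iSup_sliceSpan (f : ∀ i, V i →ₗ[F] V' i) (X : ∀ i, Submodule F (V' i)) :
    (⨆ i, sliceSpan F i (X i : Set (V' i))).comap (PiTensorProduct.map f) =
      ⨆ i, sliceSpan F i ((X i).comap (f i) : Set (V i)) := by
  calc (⨆ i, sliceSpan F i (X i : Set (V' i))).comap (PiTensorProduct.map f)
    _ = (PiTensorProduct.map fun i => (X i).mkQ).ker.comap (PiTensorProduct.map f) := by
      simp only [ker_map_eq_iSup_sliceSpan, Submodule.ker_mkQ]
    _ = (PiTensorProduct.map fun i => (X i).mkQ ∘ₗ f i).ker := by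
      rw [PiTensorProduct.map_comp, LinearMap.ker_comp]
    _ = ⨆ i, sliceSpan F i ((X i).comap (f i) : Set (V i)) := by
      simp only [ker_map_eq_iSup_sliceSpan, LinearMap.ker_comp, Submodule.ker_mkQ]

theorem mem_iSup_sliceSpan_comap_subtype_of_sum_mem {κ : ι → Type*} [Fintype (∀ i, κ i)]
    (W : ∀ i, κ i → Submodule F (V i)) (Tc : ∀ α : (∀ i, κ i), ⨂[F] i, W i (α i))
    (X : ∀ i, Submodule F (V i))
    (hX : ∑ α, PiTensorProduct.map (fun i => (W i (α i)).subtype) (Tc α) ∈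
      ⨆ i, sliceSpan F i (X i : Set (V i)))
    (β : ∀ i, κ i) (hβ : ∀ α ≠ β, Tc α ≠ 0 → ∃ i, W i (α i) ≤ X i) :
    Tc β ∈ ⨆ i, sliceSpan F i ((X i).comap (W i (β i)).subtype : Set (W i (β i))) := by
  classical
  rw [← comap_map_iSup_sliceSpan, Submodule.mem_comap]
  rw [← Finset.add_sum_erase _ _ (Finset.mem_univ β)] at hX
  refine (Submodule.add_mem_iff_left _ (Submodule.sum_mem _ fun α hα => ?_)).1 hX
  by_cases hTα : Tc α = 0
  · simp [hTα]
  · obtain ⟨i, hi⟩ := hβ α (Finset.ne_of_mem_erase hα) hTα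
    refine Submodule.mem_iSup_of_mem i (sliceSpan_mono ?_ (map_mem_sliceSpan_range _ (Tc α) i))
    simpa using hi

end Field

end SliceSpan

section SliceRank

variable {F : Type*} [Field F] {d : ℕ} {V : Fin d → Type*}
  [∀ i, AddCommGroup (V i)] [∀ i, Module F (V i)]

theorem tensorSliceRank_le_card {κ : Type*} [Fintype κ] {T : ⨂[F] i, V i} (k : κ → Fin d)
    (u : ∀ j, V (k j)) (hT : T ∈ ⨆ j, sliceSpan F (k j) {u j}) :
    tensorSliceRank F V T ≤ Fintype.card κ := by
  obtain ⟨S, hS, hsum⟩ := (Submodule.mem_iSup_iff_exists_finsupp _ _).1 hT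
  let e := (Fintype.equivFin κ).symm
  refine Nat.sInf_le ⟨S ∘ e, fun j => ⟨k (e j), u (e j), hS (e j)⟩, ?_⟩
  rw [← hsum, Finsupp.sum_fintype _ _ fun _ => rfl]
  exact (e.sum_comp S).symm

theorem exists_mem_iSup_sliceSpan_singleton (hd : 0 < d) (T : ⨂[F] i, V i) :
    ∃ (k : Fin (tensorSliceRank F V T) → Fin d) (u : ∀ j, V (k j)),
      T ∈ ⨆ j, sliceSpan F (k j) {u j} := by
  have hne : {r | ∃ S : Fin r → ⨂[F] i, V i,
      (∀ j, ∃ i : Fin d, ∃ u : V i, S j ∈ sliceSpan F i {u}) ∧ T = ∑ j, S j}.Nonempty := by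
    have hT : T ∈ Submodule.span F (Set.range (PiTensorProduct.tprod F)) := by
      rw [PiTensorProduct.span_tprod_eq_top]; trivial
    obtain ⟨n, c, v, hv⟩ := Submodule.mem_span_set'.1 hT
    refine ⟨n, fun j => c j • (v j : ⨂[F] i, V i), fun j => ?_, hv.symm⟩
    obtain ⟨w, hw⟩ := (v j).2
    exact ⟨⟨0, hd⟩, w ⟨0, hd⟩, Submodule.smul_mem _ _ (hw ▸ tprod_mem_sliceSpan rfl)⟩
  obtain ⟨S, hS, hT⟩ := Nat.sInf_mem hne
  choose k u hu using hS
  have hmem := Submodule.sum_mem_iSup hu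
  rw [← hT] at hmem
  exact ⟨k, u, hmem⟩

theorem tensorSliceRank_le_sum_finrank {T : ⨂[F] i, V i} (U : ∀ i, Submodule F (V i))
    [∀ i, FiniteDimensional F (U i)] (hT : T ∈ ⨆ i, sliceSpan F i (U i : Set (V i))) :
    tensorSliceRank F V T ≤ ∑ i, Module.finrank F (U i) := by
  let b (i : Fin d) := Module.finBasis F (U i)
  have hU (i : Fin d) : U i = Submodule.span F (Set.range fun j => (b i j : V i)) := by
    rw [Set.range_comp' Subtype.val, ← Submodule.coe_subtype, ← Submodule.map_span, (b i).span_eq,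
      Submodule.map_subtype_top]
  have hsup : ⨆ i, sliceSpan F i (U i : Set (V i)) =
      ⨆ p : Σ i, Fin (Module.finrank F (U i)), sliceSpan F p.1 {(b p.1 p.2 : V p.1)} := by
    rw [iSup_sigma]
    exact iSup_congr fun i => by rw [← sliceSpan_span_range, ← hU i]
  calc tensorSliceRank F V T
    _ ≤ Fintype.card (Σ i, Fin (Module.finrank F (U i))) :=
      tensorSliceRank_le_card _ _ (hsup ▸ hT)
    _ = ∑ i, Module.finrank F (U i) := by simp only [Fintype.card_sigma, Fintype.card_fin]

theorem exists_mem_iSup_sliceSpan_sum_finrank_le (hd : 0 < d) (T : ⨂[F] i, V i) :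
    ∃ U : ∀ i, Submodule F (V i), (∀ i, FiniteDimensional F (U i)) ∧
      T ∈ ⨆ i, sliceSpan F i (U i : Set (V i)) ∧
      ∑ i, Module.finrank F (U i) ≤ tensorSliceRank F V T := by
  obtain ⟨k, u, hT⟩ := exists_mem_iSup_sliceSpan_singleton hd T
  let w (i : Fin d) (j : {j // k j = i}) : V i := j.2 ▸ u j
  refine ⟨fun i => Submodule.span F (Set.range (w i)),
    fun i => FiniteDimensional.span_of_finite F (Set.finite_range _), ?_, ?_⟩
  · refine (iSup_le fun j => ?_ : _ ≤ ⨆ i, sliceSpan F i _) hT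
    refine le_iSup_of_le (k j) (sliceSpan_mono (Set.singleton_subset_iff.2 ?_))
    exact Submodule.subset_span ⟨⟨j, rfl⟩, rfl⟩
  · calc ∑ i, Module.finrank F (Submodule.span F (Set.range (w i)))
      _ ≤ ∑ i, Fintype.card {j // k j = i} :=
        Finset.sum_le_sum fun i _ => finrank_range_le_card (w i)
      _ = tensorSliceRank F V T := by
        rw [← Fintype.card_sigma, Fintype.card_congr (Equiv.sigmaFiberEquiv k), Fintype.card_fin]

theorem tensorSliceRank_zero_add_tensorSliceRank_one_le_sum (hd : 0 < d)
    (W : ∀ i, Fin 2 → Submodule F (V i)) (hW : ∀ i, IsCompl (W i 0) (W i 1))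
    (Tc : ∀ α : Fin d → Fin 2, ⨂[F] i, W i (α i)) (S : Set (Fin d))
    (hzero : ∀ α ≠ fun _ => 0, Tc α ≠ 0 → ∃ i ∈ S, α i = 1)
    (hone : ∀ α ≠ fun _ => 1, Tc α ≠ 0 → ∃ i ∉ S, α i = 0) :
    tensorSliceRank F (fun i => W i 0) (Tc fun _ => 0) +
        tensorSliceRank F (fun i => W i 1) (Tc fun _ => 1) ≤
      tensorSliceRank F V (∑ α, PiTensorProduct.map (fun i => (W i (α i)).subtype) (Tc α)) := by
  set T := ∑ α, PiTensorProduct.map (fun i => (W i (α i)).subtype) (Tc α)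
  obtain ⟨U, hfin, hT, hrank⟩ := exists_mem_iSup_sliceSpan_sum_finrank_le hd T
  -- In each position only one of the two copies of `U i` is enlarged, so that the dimensions of
  -- the two traces add up to exactly that of `U i`.
  have hX (i : Fin d) : ∃ X₀ X₁ : Submodule F (V i), U i ≤ X₀ ∧ U i ≤ X₁ ∧
      (i ∈ S → W i 1 ≤ X₀) ∧ (i ∉ S → W i 0 ≤ X₁) ∧
      FiniteDimensional F (X₀.comap (W i 0).subtype) ∧
      FiniteDimensional F (X₁.comap (W i 1).subtype) ∧
      Module.finrank F (X₀.comap (W i 0).subtype) + Module.finrank F (X₁.comap (W i 1).subtype) =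
        Module.finrank F (U i) := by
    by_cases hi : i ∈ S
    · exact ⟨U i ⊔ W i 1, U i, le_sup_left, le_rfl, fun _ => le_sup_right, (absurd hi ·),
        finiteDimensional_comap_subtype_sup (hW i) (U i), inferInstance,
        finrank_comap_subtype_sup_add_finrank_comap_subtype (hW i) (U i)⟩
    · exact ⟨U i, U i ⊔ W i 0, le_rfl, le_sup_left, (absurd · hi), fun _ => le_sup_right,
        inferInstance, finiteDimensional_comap_subtype_sup (hW i).symm (U i), (add_comm _ _).trans
          (finrank_comap_subtype_sup_add_finrank_comap_subtype (hW i).symm (U i))⟩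
  choose X₀ X₁ hUX₀ hUX₁ hWX₀ hWX₁ hfin₀ hfin₁ hfinrank using hX
  have h₀ := mem_iSup_sliceSpan_comap_subtype_of_sum_mem W Tc X₀
    (iSup_mono (fun i => sliceSpan_mono (hUX₀ i)) hT) (fun _ => 0)
    fun α hα hTα => (hzero α hα hTα).imp fun i ⟨hi, hαi⟩ => by rw [hαi]; exact hWX₀ i hi
  have h₁ := mem_iSup_sliceSpan_comap_subtype_of_sum_mem W Tc X₁
    (iSup_mono (fun i => sliceSpan_mono (hUX₁ i)) hT) (fun _ => 1)
    fun α hα hTα => (hone α hα hTα).imp fun i ⟨hi, hαi⟩ => by rw [hαi]; exact hWX₁ i hi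
  calc tensorSliceRank F (fun i => W i 0) (Tc fun _ => 0) +
        tensorSliceRank F (fun i => W i 1) (Tc fun _ => 1)
    _ ≤ ∑ i, Module.finrank F ((X₀ i).comap (W i 0).subtype) +
        ∑ i, Module.finrank F ((X₁ i).comap (W i 1).subtype) :=
      add_le_add (tensorSliceRank_le_sum_finrank _ h₀) (tensorSliceRank_le_sum_finrank _ h₁)
    _ = ∑ i, Module.finrank F (U i) := by
      rw [← Finset.sum_add_distrib, Finset.sum_congr rfl fun i _ => hfinrank i]
    _ ≤ tensorSliceRank F V T := hrank

end SliceRank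

theorem sliceRank_ge_of_last_or_diag_general {F : Type*} [Field F] {d : ℕ} (hd : 2 ≤ d)
    (l : Fin d) (V : Fin d → Type*) [∀ i, AddCommGroup (V i)] [∀ i, Module F (V i)]
    (W : ∀ i : Fin d, Fin 2 → Submodule F (V i))
    (hW : ∀ i, DirectSum.IsInternal (W i))
    (T : ⨂[F] i, V i)
    (Tc : ∀ α : Fin d → Fin 2, ⨂[F] i, (W i (α i)))
    (hdecomp : T = ∑ α : Fin d → Fin 2,
      PiTensorProduct.map (fun i => (W i (α i)).subtype) (Tc α))
    (hzero : ∀ α : Fin d → Fin 2, ¬(α l = 1 ∨ α = (fun _ => 0)) → Tc α = 0) :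
    tensorSliceRank F V T ≥
      tensorSliceRank F (fun i => (W i 0)) (Tc fun _ => 0) +
        tensorSliceRank F (fun i => (W i 1)) (Tc fun _ => 1) := by
  have hcompl (i : Fin d) : IsCompl (W i 0) (W i 1) :=
    (hW i).isCompl zero_ne_one (by ext j; fin_cases j <;> simp)
  have hsupp (α : Fin d → Fin 2) (hα : Tc α ≠ 0) : α l = 1 ∨ α = fun _ => 0 :=
    not_not.1 (mt (hzero α) hα)
  have : Nontrivial (Fin d) := Fin.nontrivial_iff_two_le.2 hd
  obtain ⟨m, hml⟩ := exists_ne l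
  rw [hdecomp]
  refine tensorSliceRank_zero_add_tensorSliceRank_one_le_sum (by omega) W hcompl Tc {l}
    (fun α hα hTα => ⟨l, rfl, (hsupp α hTα).resolve_right hα⟩) fun α hα hTα => ?_
  rcases hsupp α hTα with hl | rfl
  · by_contra! h
    refine hα (funext fun i => ?_)
    rcases eq_or_ne i l with rfl | hi
    exacts [hl, Fin.eq_one_of_ne_zero _ (h i hi)]
  · exact ⟨m, hml, rfl⟩

/-- Gowers' Theorem 3: if each component `Tᶜ α` of `T` with respect to the decompositions
`Vᵢ = Vᵢ¹ ⊕ Vᵢ²` vanishes unless the last entry of `α` is `2` (here `1`, indexing by `Fin 2`)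
or `α` is constantly `1` (here `0`), then `σ(T) ≥ σ(T^{1⋯1}) + σ(T^{2⋯2})`. -/
theorem sliceRank_ge_of_last_or_diag {F : Type*} [Field F] {d : ℕ} (hd : 2 ≤ d)
    (V : Fin d → Type*)
    [∀ i, AddCommGroup (V i)] [∀ i, Module F (V i)] [∀ i, FiniteDimensional F (V i)]
    (W : ∀ i : Fin d, Fin 2 → Submodule F (V i))
    (hW : ∀ i, DirectSum.IsInternal (W i))
    (T : ⨂[F] i, V i)
    (Tc : ∀ α : Fin d → Fin 2, ⨂[F] i, (W i (α i)))
    (hdecomp : T = ∑ α : Fin d → Fin 2,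
      PiTensorProduct.map (fun i => (W i (α i)).subtype) (Tc α))
    (hzero : ∀ α : Fin d → Fin 2,
      ¬(α ⟨d - 1, by omega⟩ = 1 ∨ α = (fun _ => 0)) → Tc α = 0) :
    tensorSliceRank F V T ≥
      tensorSliceRank F (fun i => (W i 0)) (Tc fun _ => 0) +
        tensorSliceRank F (fun i => (W i 1)) (Tc fun _ => 1) :=
  sliceRank_ge_of_last_or_diag_general hd ⟨d - 1, by omega⟩ V W hW T Tc hdecomp hzero
end

section
/- For any $d$-tensors $T_1, \dots, T_m$ over a field (each on its own product of finite index sets, $d \geq 2$), the slice rank of the direct sum $T_1 \oplus \cdots \oplus T_m$ equals $\sigma(T_1) + \cdots + \sigma(T_m)$. -/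
open scoped BigOperators

/-- A tensor `T : (∀ i, X i) → F` has slice rank at most one. -/
def IsSliceOne {F : Type*} [Field F] {d : ℕ} {X : Fin d → Type*}
    (T : (∀ i, X i) → F) : Prop :=
  ∃ (i : Fin d) (u : X i → F) (v : (∀ i, X i) → F),
    (∀ x y : ∀ i, X i, (∀ j, j ≠ i → x j = y j) → v x = v y) ∧
    ∀ x, T x = u (x i) * v x

/-- Slice rank of a function tensor: least number of slice-rank-one summands. -/
noncomputable def sliceRank {F : Type*} [Field F] {d : ℕ} {X : Fin d → Type*}
    (T : (∀ i, X i) → F) : ℕ :=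
  sInf {r | ∃ S : Fin r → ((∀ i, X i) → F),
    (∀ k, IsSliceOne (S k)) ∧ ∀ x, T x = ∑ k, S k x}

/-- The direct sum of a family of `d`-tensors `T j : (∀ i, X j i) → F`, as a tensor on
`∀ i, Σ j, X j i`: it agrees with `T j` on the `j`-th diagonal block and is `0` off the
diagonal blocks. -/
noncomputable def directSumTensor {F : Type*} [Field F] {d m : ℕ}
    {X : Fin m → Fin d → Type*} (T : ∀ j, (∀ i, X j i) → F) :
    (∀ i, Σ j, X j i) → F := fun x =>
  ∑ j : Fin m, if h : ∀ i, (x i).1 = j then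
      T j (fun i => cast (congrArg (fun j' => X j' i) (h i)) (x i).2)
    else 0

/-!
The argument rests on the linear-algebraic description of slice rank: `T` is a sum of `r` slices
iff there are subspaces `A i ≤ X i → F` of total codimension at most `r` on whose product the
multilinear extension of `T` vanishes. Given such subspaces for each `T j`, their direct sums serve
for the direct sum of the tensors. Conversely, given subspaces `A i` for the direct sum, order the
blocks, and let the subspace for block `j` in direction `i` consist of the `j`-th components of
those elements of `A i` which vanish on all blocks after `j`; as in Gaussian elimination, passing to
these leading components does not increase the total codimension. Using opposite orders in two
directions, which needs `2 ≤ d`, makes the contributions of the blocks other than `j` vanish, so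
that `T j` vanishes on its subspaces.
-/

open Module

section MultilinearExtension

variable {ι R : Type*} [Fintype ι] [DecidableEq ι] [CommSemiring R] {X : ι → Type*}
  [∀ i, Fintype (X i)]

/-- The multilinear form whose coefficients in the standard bases of the spaces `X i → R` are the
entries of the tensor `T`. -/
noncomputable def multilinearExtension (T : (∀ i, X i) → R) :
    MultilinearMap R (fun i => X i → R) R :=
  ∑ x, T x • (MultilinearMap.mkPiAlgebra R ι R).compLinearMap fun i => LinearMap.proj (x i)

lemma multilinearExtension_apply (T : (∀ i, X i) → R) (f : ∀ i, X i → R) :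
    multilinearExtension T f = ∑ x, T x * ∏ i, f i (x i) := by
  simp [multilinearExtension]

lemma multilinearExtension_single [∀ i, DecidableEq (X i)] (T : (∀ i, X i) → R) (x : ∀ i, X i) :
    multilinearExtension T (fun i => Pi.single (x i) 1) = T x := by
  rw [multilinearExtension_apply, Finset.sum_eq_single x]
  · simp
  · intro y _ hyx
    obtain ⟨i, hi⟩ := Function.ne_iff.1 hyx
    rw [Finset.prod_eq_zero (Finset.mem_univ i) (Pi.single_eq_of_ne hi 1), mul_zero]
  · simp

lemma multilinearExtension_finsetSum {κ : Type*} (s : Finset κ) (S : κ → (∀ i, X i) → R)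
    (f : ∀ i, X i → R) :
    multilinearExtension (fun x => ∑ k ∈ s, S k x) f = ∑ k ∈ s, multilinearExtension (S k) f := by
  simp only [multilinearExtension_apply, Finset.sum_mul]
  exact Finset.sum_comm

lemma sum_mul_eq_zero_of_dependsOn {i : ι} {g : X i → R} {h : (∀ i, X i) → R}
    (hg : ∑ y, g y = 0) (hh : DependsOn h {i}ᶜ) : ∑ x : ∀ i, X i, g (x i) * h x = 0 := by
  rw [← (Equiv.piSplitAt i X).symm.sum_comp, Fintype.sum_prod_type_right]
  refine Finset.sum_eq_zero fun z _ => ?_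
  rcases isEmpty_or_nonempty (X i) with _ | ⟨⟨y₀⟩⟩
  · exact Fintype.sum_empty _
  have h_const (y : X i) :
      h ((Equiv.piSplitAt i X).symm (y, z)) = h ((Equiv.piSplitAt i X).symm (y₀, z)) :=
    hh fun j hj => by
      have hji : j ≠ i := hj
      simp [hji]
  simp only [h_const, ← Finset.sum_mul, Equiv.piSplitAt_symm_apply, dite_true, hg, zero_mul]

lemma multilinearExtension_eq_zero_of_slice {i : ι} {u : X i → R} {v : (∀ i, X i) → R}
    (hv : DependsOn v {i}ᶜ) {f : ∀ i, X i → R} (hf : Fintype.linearCombination R u (f i) = 0) :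
    multilinearExtension (fun x => u (x i) * v x) f = 0 := by
  have h_rest : DependsOn (fun x : ∀ i, X i => v x * ∏ j ∈ Finset.univ.erase i, f j (x j)) {i}ᶜ :=
    fun x y hxy => congrArg₂ (· * ·) (hv hxy) <| Finset.prod_congr rfl fun j hj => by
      rw [hxy j (Finset.ne_of_mem_erase hj)]
  rw [multilinearExtension_apply, ← sum_mul_eq_zero_of_dependsOn hf h_rest]
  refine Finset.sum_congr rfl fun x _ => ?_
  rw [← Finset.mul_prod_erase _ _ (Finset.mem_univ i), smul_eq_mul]
  ring

/-- `T` vanishes on the product of the subspaces `A i` when its multilinear extension does. -/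
def VanishesOn (T : (∀ i, X i) → R) (A : ∀ i, Submodule R (X i → R)) : Prop :=
  ∀ f : ∀ i, X i → R, (∀ i, f i ∈ A i) → multilinearExtension T f = 0

end MultilinearExtension

lemma map_sub_map_sub_eq_sum_map_update {ι R N : Type*} [Fintype ι] [LinearOrder ι] [Ring R]
    {V : ι → Type*} [∀ i, AddCommGroup (V i)] [∀ i, Module R (V i)] [AddCommGroup N] [Module R N]
    (f : MultilinearMap R V N) (a b : ∀ i, V i) :
    f a - f (a - b) =
      ∑ i, f (Function.update (fun j => if j < i then a j else a j - b j) i (b i)) := by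
  have h := f.map_sub_map_piecewise a (a - b) Finset.univ
  rw [Finset.piecewise_univ] at h
  rw [h]
  refine Finset.sum_congr rfl fun i _ => congrArg f (funext fun j => ?_)
  rcases eq_or_ne j i with rfl | hj
  · simp
  · simp [hj, hj.symm]

section Codimension

variable {ι K M : Type*} [DivisionRing K] [AddCommGroup M] [Module K M]
  {V : ι → Type*} [∀ j, AddCommGroup (V j)] [∀ j, Module K (V j)]

lemma finrank_quotient_iInf_comap_le [Fintype ι] (π : ∀ j, M →ₗ[K] V j)
    (A : ∀ j, Submodule K (V j)) [∀ j, FiniteDimensional K (V j ⧸ A j)] :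
    finrank K (M ⧸ ⨅ j, (A j).comap (π j)) ≤ ∑ j, finrank K (V j ⧸ A j) := by
  have h_ker : LinearMap.ker (LinearMap.pi fun j => (A j).mkQ ∘ₗ π j) =
      ⨅ j, (A j).comap (π j) := by
    simp only [LinearMap.ker_pi, LinearMap.ker_comp, Submodule.ker_mkQ]
  rw [← h_ker, (LinearMap.quotKerEquivRange _).finrank_eq, ← finrank_pi_fintype K]
  exact Submodule.finrank_le _

lemma exists_sub_sum_smul_mem (A : Submodule K M) [FiniteDimensional K (M ⧸ A)] :
    ∃ (φ : Fin (finrank K (M ⧸ A)) → M →ₗ[K] K) (w : Fin (finrank K (M ⧸ A)) → M),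
      ∀ v, v - ∑ k, φ k v • w k ∈ A := by
  let b := finBasis K (M ⧸ A)
  choose w hw using fun k => A.mkQ_surjective (b k)
  refine ⟨fun k => b.coord k ∘ₗ A.mkQ, w, fun v => ?_⟩
  rw [← Submodule.Quotient.mk_eq_zero, ← A.mkQ_apply, map_sub, map_sum, sub_eq_zero]
  simp [hw]

end Codimension

section SliceRank

variable {F : Type*} [Field F] {d : ℕ} {X : Fin d → Type*}

lemma sliceRank_le_card {κ : Type*} [Fintype κ] {T : (∀ i, X i) → F} (S : κ → (∀ i, X i) → F)
    (hS : ∀ k, IsSliceOne (S k)) (hT : ∀ x, T x = ∑ k, S k x) : sliceRank T ≤ Fintype.card κ :=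
  Nat.sInf_le ⟨fun k => S ((Fintype.equivFin κ).symm k), fun _ => hS _, fun x => by
    rw [hT, (Fintype.equivFin κ).symm.sum_comp fun k => S k x]⟩

lemma exists_slice_decomposition (i : Fin d) [Finite (X i)] (T : (∀ i, X i) → F) :
    ∃ S : Fin (sliceRank T) → (∀ i, X i) → F,
      (∀ k, IsSliceOne (S k)) ∧ ∀ x, T x = ∑ k, S k x := by
  classical
  refine Nat.sInf_mem (s := {r | ∃ S : Fin r → (∀ i, X i) → F,
    (∀ k, IsSliceOne (S k)) ∧ ∀ x, T x = ∑ k, S k x}) ?_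
  have : Fintype (X i) := .ofFinite _
  let e := Fintype.equivFin (X i)
  refine ⟨Fintype.card (X i), fun k x =>
    (Pi.single (e.symm k) 1 : X i → F) (x i) * T (Function.update x i (e.symm k)),
    fun k => ⟨i, _, _, fun x y hxy => ?_, fun _ => rfl⟩, fun x => ?_⟩
  · congr 1
    ext j
    rcases eq_or_ne j i with rfl | hj
    · simp
    · simp [hj, hxy j hj]
  · rw [e.symm.sum_comp fun y => (Pi.single y 1 : X i → F) (x i) * T (Function.update x i y)]
    simp [Pi.single_apply]

variable [∀ i, Fintype (X i)]

lemma exists_vanishesOn_sum_finrank_quotient_le_sliceRank [NeZero d] (T : (∀ i, X i) → F) :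
    ∃ A : ∀ i, Submodule F (X i → F),
      VanishesOn T A ∧ ∑ i, finrank F ((X i → F) ⧸ A i) ≤ sliceRank T := by
  classical
  obtain ⟨S, hS, hT⟩ := exists_slice_decomposition 0 T
  choose dir u v hv hS using hS
  let φ (i : Fin d) (k : {k // dir k = i}) : (X i → F) →ₗ[F] F :=
    Fintype.linearCombination F (k.2 ▸ u k.1 : X i → F)
  refine ⟨fun i => ⨅ k, (⊥ : Submodule F F).comap (φ i k), fun f hf => ?_, ?_⟩
  · rw [funext hT, multilinearExtension_finsetSum]
    refine Finset.sum_eq_zero fun k _ => ?_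
    rw [funext (hS k)]
    exact multilinearExtension_eq_zero_of_slice (hv k)
      ((Submodule.mem_iInf _).1 (hf (dir k)) ⟨k, rfl⟩)
  · calc ∑ i, finrank F ((X i → F) ⧸ ⨅ k, (⊥ : Submodule F F).comap (φ i k))
        ≤ ∑ i, ∑ _k : {k // dir k = i}, finrank F (F ⧸ (⊥ : Submodule F F)) :=
          Finset.sum_le_sum fun i _ => finrank_quotient_iInf_comap_le (φ i) fun _ => ⊥
      _ = ∑ _k : Fin (sliceRank T), 1 := by
          simp only [(Submodule.quotEquivOfEqBot (⊥ : Submodule F F) rfl).finrank_eq,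
            finrank_self]
          exact Fintype.sum_fiberwise dir fun _ => 1
      _ = sliceRank T := by simp

lemma sliceRank_le_of_vanishesOn {T : (∀ i, X i) → F} {A : ∀ i, Submodule F (X i → F)}
    (hA : VanishesOn T A) : sliceRank T ≤ ∑ i, finrank F ((X i → F) ⧸ A i) := by
  classical
  choose φ w hφw using fun i => exists_sub_sum_smul_mem (A i)
  let e (x : ∀ i, X i) (i : Fin d) : X i → F := Pi.single (x i) 1
  let p (x : ∀ i, X i) (i : Fin d) : X i → F := ∑ k, φ i k (e x i) • w i k
  let rest (i : Fin d) (g : X i → F) (x : ∀ i, X i) : F :=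
    multilinearExtension T (Function.update (fun j => if j < i then e x j else e x j - p x j) i g)
  have h_expand (x : ∀ i, X i) : T x = ∑ i, ∑ k, φ i k (e x i) * rest i (w i k) x :=
    calc T x = multilinearExtension T (e x) := (multilinearExtension_single T x).symm
      _ = multilinearExtension T (e x) - multilinearExtension T (e x - p x) := by
          rw [hA (e x - p x) fun i => hφw i (e x i), sub_zero]
      _ = ∑ i, rest i (p x i) x := map_sub_map_sub_eq_sum_map_update _ _ _
      _ = ∑ i, ∑ k, φ i k (e x i) * rest i (w i k) x := Finset.sum_congr rfl fun i _ => by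
          simp only [rest, p, MultilinearMap.map_update_sum, MultilinearMap.map_update_smul,
            smul_eq_mul]
  have h_slice (i : Fin d) (k : Fin (finrank F ((X i → F) ⧸ A i))) :
      IsSliceOne fun x => φ i k (e x i) * rest i (w i k) x := by
    refine ⟨i, fun y => φ i k (Pi.single y 1), rest i (w i k),
      fun x y hxy => congrArg (multilinearExtension T) (funext fun j => ?_), fun _ => rfl⟩
    rcases eq_or_ne j i with rfl | hj
    · simp
    · simp [e, p, hj, hxy j hj]
  calc sliceRank T ≤ Fintype.card (Σ i, Fin (finrank F ((X i → F) ⧸ A i))) :=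
        sliceRank_le_card _ (fun q => h_slice q.1 q.2) fun x => by
          rw [h_expand, Fintype.sum_sigma]
    _ = ∑ i, finrank F ((X i → F) ⧸ A i) := by simp

end SliceRank

section LeadingBlock

variable {ι α K M : Type*} [DivisionRing K] [AddCommGroup M] [Module K M]
  {V : ι → Type*} [∀ j, AddCommGroup (V j)] [∀ j, Module K (V j)]

/-- The `j`-th components (under the projections `π`) of those elements of `A` whose components of
rank greater than `ρ j` vanish. The function `ρ` ranks the blocks; it stands in for an order on `ι`
so that several orders can be used at once. -/
def leadingBlock [LT α] (π : ∀ j, M →ₗ[K] V j) (ρ : ι → α) (A : Submodule K M) (j : ι) :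
    Submodule K (V j) :=
  (A ⊓ ⨅ (k) (_ : ρ j < ρ k), LinearMap.ker (π k)).map (π j)

instance finiteDimensional_leadingBlock [LT α] [FiniteDimensional K M] (π : ∀ j, M →ₗ[K] V j)
    (ρ : ι → α) (A : Submodule K M) (j : ι) : FiniteDimensional K (leadingBlock π ρ A j) :=
  Module.Finite.map _ (π j)

lemma mem_leadingBlock [LT α] {π : ∀ j, M →ₗ[K] V j} {ρ : ι → α} {A : Submodule K M} {j : ι}
    {v : V j} :
    v ∈ leadingBlock π ρ A j ↔ ∃ f ∈ A, (∀ k, ρ j < ρ k → π k f = 0) ∧ π j f = v := by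
  simp [leadingBlock, Submodule.mem_iInf, and_assoc]

lemma leadingBlock_mono [LT α] (π : ∀ j, M →ₗ[K] V j) (ρ : ι → α) {A B : Submodule K M}
    (h : A ≤ B) (j : ι) : leadingBlock π ρ A j ≤ leadingBlock π ρ B j :=
  Submodule.map_mono (inf_le_inf_right _ h)

lemma finrank_eq_finrank_map_add_finrank_inf_ker {N : Type*} [AddCommGroup N] [Module K N]
    (f : M →ₗ[K] N) (A : Submodule K M) [FiniteDimensional K A] :
    finrank K A = finrank K (A.map f) + finrank K (A ⊓ LinearMap.ker f : Submodule K M) := by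
  rw [← (f.domRestrict A).finrank_range_add_finrank_ker, LinearMap.range_domRestrict,
    LinearMap.ker_domRestrict, ← Submodule.finrank_map_subtype_eq, Submodule.map_comap_subtype]

lemma finrank_le_sum_finrank_leadingBlock [Fintype ι] [LinearOrder α] [FiniteDimensional K M]
    {π : ∀ j, M →ₗ[K] V j} (hπ : ⨅ j, LinearMap.ker (π j) = ⊥) (ρ : ι → α)
    (A : Submodule K M) :
    finrank K A ≤ ∑ j, finrank K (leadingBlock π ρ A j) := by
  classical
  suffices h : ∀ (s : Finset ι) (A : Submodule K M), (∀ k ∉ s, A ≤ LinearMap.ker (π k)) →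
      finrank K A ≤ ∑ j ∈ s, finrank K (leadingBlock π ρ A j) from
    h Finset.univ A fun k hk => absurd (Finset.mem_univ k) hk
  intro s
  induction s using Finset.induction_on_max_value ρ with
  | empty =>
    intro A hA
    have hA_bot : A = ⊥ := le_bot_iff.1 (hπ ▸ le_iInf fun k => hA k (Finset.notMem_empty k))
    simp [hA_bot]
  | insert a s ha hmax ih =>
    intro A hA
    have h_top : A.map (π a) ≤ leadingBlock π ρ A a :=
      Submodule.map_mono <| le_inf le_rfl <| le_iInf₂ fun k hk => hA k fun hks =>
        (Finset.mem_insert.1 hks).elim (fun hka => hk.ne (congrArg ρ hka.symm))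
          fun hks => hk.not_ge (hmax k hks)
    have h_rest : finrank K (A ⊓ LinearMap.ker (π a) : Submodule K M) ≤
        ∑ j ∈ s, finrank K (leadingBlock π ρ A j) := by
      refine (ih _ fun k hks => ?_).trans <| Finset.sum_le_sum fun j _ =>
        Submodule.finrank_mono (leadingBlock_mono π ρ inf_le_left j)
      rcases eq_or_ne k a with rfl | hka
      · exact inf_le_right
      · exact inf_le_left.trans (hA k (by simp [hka, hks]))
    rw [Finset.sum_insert ha, finrank_eq_finrank_map_add_finrank_inf_ker (π a)]
    exact add_le_add (Submodule.finrank_mono h_top) h_rest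

end LeadingBlock

section BlockRestrict

variable {ι R : Type*} [Semiring R] {Y : ι → Type*}

/-- Restriction of a function on a disjoint union to its `j`-th part. -/
def blockRestrict (j : ι) : ((Σ j, Y j) → R) →ₗ[R] (Y j → R) :=
  LinearMap.funLeft R R (Sigma.mk j)

lemma iInf_ker_blockRestrict :
    ⨅ j, LinearMap.ker (blockRestrict (R := R) (Y := Y) j) = ⊥ := by
  refine (Submodule.eq_bot_iff _).2 fun f hf => funext fun p => ?_
  exact congrFun ((Submodule.mem_iInf _).1 hf p.1) p.2

end BlockRestrict

lemma sum_finrank_quotient_leadingBlock_le {ι α K : Type*} [Fintype ι] [LinearOrder α]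
    [DivisionRing K] {Y : ι → Type*} [∀ j, Finite (Y j)] (ρ : ι → α)
    (A : Submodule K ((Σ j, Y j) → K)) :
    ∑ j, finrank K ((Y j → K) ⧸ leadingBlock blockRestrict ρ A j) ≤
      finrank K (((Σ j, Y j) → K) ⧸ A) := by
  have (j : ι) : Fintype (Y j) := .ofFinite _
  have h_blocks : ∑ j, finrank K ((Y j → K) ⧸ leadingBlock blockRestrict ρ A j) +
      ∑ j, finrank K (leadingBlock blockRestrict ρ A j) =
      finrank K (((Σ j, Y j) → K) ⧸ A) + finrank K A := by
    simp only [← Finset.sum_add_distrib, Submodule.finrank_quotient_add_finrank,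
      finrank_fintype_fun_eq_card, Fintype.card_sigma]
  have h_lead := finrank_le_sum_finrank_leadingBlock iInf_ker_blockRestrict ρ A
  omega

section DirectSum

variable {F : Type*} [Field F] {d m : ℕ} {X : Fin m → Fin d → Type*}
  {T : ∀ j, (∀ i, X j i) → F}

lemma multilinearExtension_directSumTensor [∀ j i, Fintype (X j i)]
    (T : ∀ j, (∀ i, X j i) → F) (f : ∀ i, (Σ j, X j i) → F) :
    multilinearExtension (directSumTensor T) f =
      ∑ j, multilinearExtension (T j) fun i => blockRestrict j (f i) := by
  unfold directSumTensor
  rw [multilinearExtension_finsetSum]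
  refine Finset.sum_congr rfl fun j _ => ?_
  rw [multilinearExtension_apply, multilinearExtension_apply]
  refine (Finset.sum_of_injOn (fun y i => ⟨j, y i⟩) (fun y _ z _ hyz => ?_) (by simp)
    (fun x _ hx => ?_) fun y _ => ?_).symm
  · exact funext fun i => by simpa using congrFun hyz i
  · rw [dif_neg fun h => hx ?_, zero_mul]
    have h_lift (i : Fin d) : ∃ y : X j i, ⟨j, y⟩ = x i := by
      rw [← h i]
      exact ⟨(x i).2, rfl⟩
    choose y hy using h_lift
    exact ⟨y, by simp, funext hy⟩
  · simp [blockRestrict, LinearMap.funLeft_apply]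

lemma vanishesOn_directSumTensor [∀ j i, Fintype (X j i)] {A : ∀ j i, Submodule F (X j i → F)}
    (hA : ∀ j, VanishesOn (T j) (A j)) :
    VanishesOn (directSumTensor T) fun i => ⨅ j, (A j i).comap (blockRestrict j) := by
  intro f hf
  rw [multilinearExtension_directSumTensor]
  exact Finset.sum_eq_zero fun j _ => hA j _ fun i => (Submodule.mem_iInf _).1 (hf i) j

lemma vanishesOn_leadingBlock [∀ j i, Fintype (X j i)] {α : Type*} [LT α]
    {A : ∀ i, Submodule F ((Σ j, X j i) → F)} (hA : VanishesOn (directSumTensor T) A)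
    {ρ : Fin d → Fin m → α} {j : Fin m} (hρ : ∀ k ≠ j, ∃ i, ρ i j < ρ i k) :
    VanishesOn (T j) fun i => leadingBlock blockRestrict (ρ i) (A i) j := by
  intro g hg
  choose f hfA hf_later hfg using fun i => mem_leadingBlock.1 (hg i)
  have h_other : ∀ k ≠ j, multilinearExtension (T k) (fun i => blockRestrict k (f i)) = 0 := by
    intro k hk
    obtain ⟨i, hi⟩ := hρ k hk
    exact MultilinearMap.map_coord_zero _ i (hf_later i k hi)
  calc multilinearExtension (T j) g
      = multilinearExtension (T j) fun i => blockRestrict j (f i) := by rw [funext hfg]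
    _ = ∑ k, multilinearExtension (T k) fun i => blockRestrict k (f i) :=
        (Fintype.sum_eq_single j h_other).symm
    _ = multilinearExtension (directSumTensor T) f :=
        (multilinearExtension_directSumTensor T f).symm
    _ = 0 := hA f hfA

lemma sliceRank_directSumTensor_le [NeZero d] [∀ j i, Finite (X j i)]
    (T : ∀ j, (∀ i, X j i) → F) :
    sliceRank (directSumTensor T) ≤ ∑ j, sliceRank (T j) := by
  have (j : Fin m) (i : Fin d) : Fintype (X j i) := .ofFinite _
  choose A hA hA_codim using fun j => exists_vanishesOn_sum_finrank_quotient_le_sliceRank (T j)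
  calc sliceRank (directSumTensor T)
      ≤ ∑ i, finrank F (((Σ j, X j i) → F) ⧸ ⨅ j, (A j i).comap (blockRestrict j)) :=
        sliceRank_le_of_vanishesOn (vanishesOn_directSumTensor hA)
    _ ≤ ∑ i, ∑ j, finrank F ((X j i → F) ⧸ A j i) :=
        Finset.sum_le_sum fun i _ => finrank_quotient_iInf_comap_le _ fun j => A j i
    _ = ∑ j, ∑ i, finrank F ((X j i → F) ⧸ A j i) := Finset.sum_comm
    _ ≤ ∑ j, sliceRank (T j) := Finset.sum_le_sum fun j _ => hA_codim j

lemma sum_sliceRank_le_sliceRank_directSumTensor (hd : 2 ≤ d) [∀ j i, Finite (X j i)]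
    (T : ∀ j, (∀ i, X j i) → F) :
    ∑ j, sliceRank (T j) ≤ sliceRank (directSumTensor T) := by
  have : NeZero d := ⟨by omega⟩
  have (j : Fin m) (i : Fin d) : Fintype (X j i) := .ofFinite _
  obtain ⟨A, hA, hA_codim⟩ :=
    exists_vanishesOn_sum_finrank_quotient_le_sliceRank (directSumTensor T)
  let ρ (i : Fin d) : Fin m → Fin m := if i.val = 0 then id else Fin.rev
  have hρ_lt (j k : Fin m) (hkj : k ≠ j) : ∃ i, ρ i j < ρ i k := by
    rcases hkj.lt_or_gt with h | h
    · exact ⟨⟨1, hd⟩, by simpa [ρ] using h⟩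
    · exact ⟨0, by simpa [ρ] using h⟩
  calc ∑ j, sliceRank (T j)
      ≤ ∑ j, ∑ i, finrank F ((X j i → F) ⧸ leadingBlock blockRestrict (ρ i) (A i) j) :=
        Finset.sum_le_sum fun j _ =>
          sliceRank_le_of_vanishesOn (vanishesOn_leadingBlock hA (hρ_lt j))
    _ = ∑ i, ∑ j, finrank F ((X j i → F) ⧸ leadingBlock blockRestrict (ρ i) (A i) j) :=
        Finset.sum_comm
    _ ≤ ∑ i, finrank F (((Σ j, X j i) → F) ⧸ A i) :=
        Finset.sum_le_sum fun i _ => sum_finrank_quotient_leadingBlock_le (ρ i) (A i)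
    _ ≤ sliceRank (directSumTensor T) := hA_codim

end DirectSum

theorem sliceRank_directSumTensor {F : Type*} [Field F] {d m : ℕ} (hd : 2 ≤ d)
    (X : Fin m → Fin d → Type*) [∀ j i, Fintype (X j i)]
    (T : ∀ j, (∀ i, X j i) → F) :
    sliceRank (directSumTensor T) = ∑ j, sliceRank (T j) := by
  have : NeZero d := ⟨by omega⟩
  exact (sliceRank_directSumTensor_le T).antisymm (sum_sliceRank_le_sliceRank_directSumTensor hd T)
end
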